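/- For integer M ≥ 2, nonnegative integers n, l, and real ν < M + 2(l+n) (so that the integral converges), the functions η^{(M)}_{n,l}(r) = (2/Γ(l+M/2)) · sqrt((n+l+(M-1)/2) Γ(n+2l+M-1)/n!) · r^l (r²+1)^{-(l+M/2)} · ₂F₁(-n, n+2l+M-1; l+M/2; 1/(r²+1)) satisfy the orthogonality relation ∫_0^∞ r^{M-1} η^{(M)}_{n₁,l}(r) η^{(M)}_{n₂,l}(r) dr = δ_{n₁,n₂}. -/

import Mathlib

open Finset

/-- Pochhammer (rising factorial) `(a)_k`. -/
noncomputable def poch (a : ℝ) (k : ℕ) : ℝ := ∏ i ∈ Finset.range k, (a + i)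

/-- Terminating Gauss hypergeometric series `₂F₁(-n, b; c; x)`. -/
noncomputable def F21fin (n : ℕ) (b c x : ℝ) : ℝ :=
  ∑ k ∈ Finset.range (n + 1),
    poch (-(n : ℝ)) k * poch b k / (poch c k * k.factorial) * x ^ k

/-- The radial functions `η^{(M)}_{n,l}(r)`. -/
noncomputable def eta (M n l : ℕ) (r : ℝ) : ℝ :=
  2 / Real.Gamma ((l : ℝ) + M / 2) *
    Real.sqrt (((n : ℝ) + l + ((M : ℝ) - 1) / 2) *
      Real.Gamma ((n : ℝ) + 2 * l + M - 1) / n.factorial) *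
    (r ^ l / (r ^ 2 + 1) ^ ((l : ℝ) + M / 2)) *
    F21fin n ((n : ℝ) + 2 * l + M - 1) ((l : ℝ) + M / 2) (1 / (r ^ 2 + 1))

/-
The substitution `x = 1 / (r ^ 2 + 1)` turns `r ^ (M - 1) * η_{n₁} * η_{n₂} dr` into a multiple of
`(x * (1 - x)) ^ (c - 1) * J_{n₁} * J_{n₂} dx` on `[0, 1]`, where `c = l + M / 2` and `J_n` is a
shifted Jacobi polynomial. The beta integrals make the `j`-th moment of `J_n`, for `j ≤ n`, a
multiple of `∑ k ≤ n, (-1) ^ k * n.choose k * P k / (z + k)` with `z = n + 2 * c - 1` and `P` an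
explicit product of two Pochhammer polynomials of total degree `n`. By Lagrange interpolation at
`0, …, n` this sum is a multiple of `P (-z)`, and `-z` is a root of `P` unless `j = n`.
-/

section Pochhammer

theorem poch_eq_eval_ascPochhammer (a : ℝ) (k : ℕ) : poch a k = (ascPochhammer ℝ k).eval a := by
  induction k with
  | zero => simp [poch]
  | succ k ih => rw [ascPochhammer_succ_eval, ← ih, poch, poch, prod_range_succ]

theorem poch_succ (a : ℝ) (k : ℕ) : poch a (k + 1) = poch a k * (a + k) :=
  prod_range_succ _ _

theorem poch_pos {a : ℝ} (ha : 0 < a) (k : ℕ) : 0 < poch a k := by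
  rw [poch_eq_eval_ascPochhammer]
  exact ascPochhammer_pos k a ha

theorem poch_neg_natCast (n k : ℕ) :
    poch (-(n : ℝ)) k = (-1) ^ k * n.choose k * k.factorial := by
  rw [poch_eq_eval_ascPochhammer, ascPochhammer_eval_neg_eq_descPochhammer,
    descPochhammer_eval_eq_descFactorial, Nat.descFactorial_eq_factorial_mul_choose]
  push_cast
  ring

theorem poch_one_sub_sub_natCast (a : ℝ) (n : ℕ) :
    poch (1 - a - n) n = (-1) ^ n * poch a n := by
  rw [poch_eq_eval_ascPochhammer, poch_eq_eval_ascPochhammer,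
    show 1 - a - n = -(a + n - 1) by ring, ascPochhammer_eval_neg_eq_descPochhammer,
    descPochhammer_eval_eq_ascPochhammer]
  ring_nf

theorem poch_mul_poch_of_le {j n : ℕ} (hj : j ≤ n) (d : ℝ) :
    poch (1 - d - n) j * poch (j + 1 - n) (n - j) =
      if j = n then (-1) ^ n * poch d n else 0 := by
  split_ifs with hjn
  · subst hjn
    rw [poch_one_sub_sub_natCast, Nat.sub_self, poch, poch, range_zero, prod_empty, mul_one]
  · have root : (j + 1 - n : ℝ) = -(n - j - 1 : ℕ) := by
      rw [Nat.sub_sub, Nat.cast_sub (by lia)]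
      push_cast
      ring
    rw [root, poch_eq_eval_ascPochhammer _ (n - j),
      ascPochhammer_eval_neg_coe_nat_of_lt (by lia), mul_zero]

theorem Gamma_add_natCast {a : ℝ} (ha : 0 < a) (k : ℕ) :
    Real.Gamma (a + k) = poch a k * Real.Gamma a := by
  induction k with
  | zero => simp [poch]
  | succ k ih =>
    rw [Nat.cast_succ, ← add_assoc, Real.Gamma_add_one (by positivity), ih, poch_succ]
    ring

end Pochhammer

section PartialFractions

open Polynomial

theorem prod_natCast_sub_erase {n k : ℕ} (hk : k ≤ n) :
    ∏ i ∈ (range (n + 1)).erase k, ((k : ℝ) - i) =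
      (-1) ^ (n - k) * k.factorial * (n - k).factorial := by
  obtain ⟨m, rfl⟩ := Nat.exists_eq_add_of_le hk
  have lower : ∏ i ∈ range k, ((k : ℝ) - i) = k.factorial := by
    rw [← descPochhammer_eval_eq_prod_range, descPochhammer_eval_eq_descFactorial,
      Nat.descFactorial_self]
  have upper : ∏ i ∈ range m, ((k : ℝ) - (k + 1 + i : ℕ)) = (-1) ^ m * m.factorial := by
    rw [← prod_range_add_one_eq_factorial, Nat.cast_prod, ← card_range m, ← prod_const,
      card_range, ← prod_mul_distrib]
    refine prod_congr rfl fun i _ => ?_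
    push_cast
    ring
  have split : (range (k + m + 1)).erase k = range k ∪ (range m).image (k + 1 + ·) := by
    ext i
    simp only [mem_erase, mem_union, mem_range, mem_image]
    constructor
    · rintro ⟨hik, hi⟩
      rcases lt_or_gt_of_ne hik with h | h
      · exact .inl h
      · exact .inr ⟨i - (k + 1), by lia, by lia⟩
    · rintro (h | ⟨a, ha, rfl⟩) <;> lia
  have disjoint : Disjoint (range k) ((range m).image (k + 1 + ·)) := by
    refine disjoint_left.mpr fun i hi hi' => ?_
    simp only [mem_range, mem_image] at hi hi'
    lia
  rw [split, prod_union disjoint, prod_image (add_right_injective (k + 1)).injOn, lower, upper,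
    Nat.add_sub_cancel_left]
  ring

theorem nodalWeight_range_natCast {n k : ℕ} (hk : k ≤ n) :
    Lagrange.nodalWeight (range (n + 1)) (Nat.cast : ℕ → ℝ) k =
      (-1) ^ (n - k) * n.choose k / n.factorial := by
  rw [Lagrange.nodalWeight, prod_inv_distrib, prod_natCast_sub_erase hk, Nat.cast_choose ℝ hk]
  have sign : ((-1 : ℝ) ^ (n - k)) * (-1) ^ (n - k) = 1 := by rw [← mul_pow]; norm_num
  field_simp
  linear_combination -sign

/- Lagrange interpolation of `P` at the nodes `0, …, n`, evaluated at `-z`. -/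
theorem sum_neg_one_pow_mul_choose_mul_eval_div {n : ℕ} {P : ℝ[X]} (hP : P.natDegree ≤ n)
    {z : ℝ} (hz : ∀ k ∈ range (n + 1), z + k ≠ 0) :
    ∑ k ∈ range (n + 1), (-1) ^ k * n.choose k * (P.eval (k : ℝ) / (z + k)) =
      n.factorial * P.eval (-z) / poch z (n + 1) := by
  have interpolation : P = Lagrange.interpolate (range (n + 1)) (Nat.cast : ℕ → ℝ)
      fun k => P.eval (k : ℝ) :=
    Lagrange.eq_interpolate Nat.cast_injective.injOn
      (degree_le_natDegree.trans_lt (by rw [card_range]; exact_mod_cast Nat.lt_succ_of_le hP))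
  have nodal : (Lagrange.nodal (range (n + 1)) (Nat.cast : ℕ → ℝ)).eval (-z) =
      (-1) ^ (n + 1) * poch z (n + 1) := by
    rw [Lagrange.eval_nodal, poch, ← card_range (n + 1), ← prod_const, card_range,
      ← prod_mul_distrib]
    exact prod_congr rfl fun i _ => by ring
  have poch_ne_zero : poch z (n + 1) ≠ 0 := prod_ne_zero_iff.mpr hz
  have eval_neg := congrArg (eval (-z)) interpolation
  rw [Lagrange.eval_interpolate_not_at_node _
    fun k hk h => hz k hk (by rw [← h]; ring), nodal] at eval_neg
  rw [eq_div_iff poch_ne_zero, eval_neg, mul_sum, mul_sum, sum_mul]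
  refine sum_congr rfl fun k hk => ?_
  have hkn := Nat.lt_succ_iff.mp (mem_range.mp hk)
  have sign : (-1 : ℝ) ^ k = (-1) ^ (n + 1) * (-1) ^ (n - k) * -1 := by
    obtain ⟨m, rfl⟩ := Nat.exists_eq_add_of_le hkn
    rw [Nat.add_sub_cancel_left, ← pow_add, ← pow_succ,
      show k + m + 1 + m + 1 = k + 2 * (m + 1) by lia, pow_add, pow_mul]
    norm_num
  have inv_sub : (-z - k : ℝ)⁻¹ = -1 / (z + k) := by
    rw [← neg_add', inv_neg, neg_div, one_div]
  rw [nodalWeight_range_natCast hkn, inv_sub, sign]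
  field_simp

end PartialFractions

section BetaWeight

open intervalIntegral ProbabilityTheory Polynomial

variable {c d : ℝ}

/-- The weight `x ^ (c - 1) * (1 - x) ^ (d - 1)` of the beta integral on `[0, 1]`. -/
noncomputable def betaWeight (c d x : ℝ) : ℝ := x ^ (c - 1) * (1 - x) ^ (d - 1)

theorem ofReal_betaWeight (c d : ℝ) {x : ℝ} (hx : x ∈ Set.uIcc 0 1) :
    (betaWeight c d x : ℂ) = (x : ℂ) ^ ((c : ℂ) - 1) * (1 - (x : ℂ)) ^ ((d : ℂ) - 1) := by
  rw [Set.uIcc_of_le zero_le_one] at hx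
  rw [betaWeight, Complex.ofReal_mul, Complex.ofReal_cpow hx.1,
    Complex.ofReal_cpow (sub_nonneg.mpr hx.2)]
  push_cast
  rfl

theorem intervalIntegrable_betaWeight (hc : 0 < c) (hd : 0 < d) :
    IntervalIntegrable (betaWeight c d) MeasureTheory.volume 0 1 := by
  have complex := Complex.betaIntegral_convergent (u := c) (v := d) (by simpa) (by simpa)
  rw [← intervalIntegrable_congr fun x hx => ofReal_betaWeight c d (Set.uIoc_subset_uIcc hx)]
    at complex
  exact ⟨complex.1.re, complex.2.re⟩

theorem integral_betaWeight (hc : 0 < c) (hd : 0 < d) :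
    ∫ x in (0 : ℝ)..1, betaWeight c d x = beta c d := by
  rw [beta_eq_betaIntegralReal c d hc hd, Complex.betaIntegral,
    ← Complex.ofReal_re (∫ x in (0 : ℝ)..1, betaWeight c d x), ← integral_ofReal]
  exact congrArg Complex.re (integral_congr fun x hx => ofReal_betaWeight c d hx)

theorem betaWeight_add_natCast (c d : ℝ) (k : ℕ) {x : ℝ} (hx : 0 < x) :
    betaWeight (c + k) d x = betaWeight c d x * x ^ k := by
  rw [betaWeight, betaWeight, add_sub_right_comm, Real.rpow_add_natCast hx.ne']
  ring

theorem integral_betaWeight_mul_pow (hc : 0 < c) (hd : 0 < d) (k : ℕ) :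
    ∫ x in (0 : ℝ)..1, betaWeight c d x * x ^ k = beta (c + k) d := by
  rw [← integral_betaWeight (by positivity) hd]
  refine integral_congr_ae (.of_forall fun x hx => ?_)
  rw [Set.uIoc_of_le zero_le_one] at hx
  exact (betaWeight_add_natCast c d k hx.1).symm

theorem integral_betaWeight_mul_sum (hc : 0 < c) (hd : 0 < d) (s : Finset ℕ) (a : ℕ → ℝ)
    (P : ℕ → ℝ[X]) :
    ∫ x in (0 : ℝ)..1, betaWeight c d x * ∑ k ∈ s, a k * (P k).eval x =
      ∑ k ∈ s, a k * ∫ x in (0 : ℝ)..1, betaWeight c d x * (P k).eval x := by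
  simp only [mul_sum, mul_left_comm (betaWeight c d _), ← integral_const_mul]
  exact integral_finsetSum fun k _ =>
    ((intervalIntegrable_betaWeight hc hd).mul_continuousOn (P k).continuousOn).const_mul (a k)

end BetaWeight

section Jacobi

open ProbabilityTheory Polynomial

variable {c d : ℝ}

/-- The Jacobi polynomial on `[0, 1]` orthogonal for `betaWeight c d`, normalised to take the
value `1` at `0`; classically it is a multiple of `P_n^{(c - 1, d - 1)}(1 - 2x)`. -/
noncomputable def shiftedJacobi (c d : ℝ) (n : ℕ) : ℝ[X] :=
  ∑ k ∈ range (n + 1), C ((-1) ^ k * n.choose k * (poch (n + c + d - 1) k / poch c k)) * X ^ k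

theorem eval_shiftedJacobi (c d : ℝ) (n : ℕ) (x : ℝ) :
    (shiftedJacobi c d n).eval x = F21fin n (n + c + d - 1) c x := by
  simp only [shiftedJacobi, F21fin, eval_finsetSum, eval_mul, eval_C, eval_pow, eval_X]
  refine sum_congr rfl fun k _ => ?_
  rw [poch_neg_natCast]
  field_simp

theorem coeff_shiftedJacobi (c d : ℝ) (n k : ℕ) :
    (shiftedJacobi c d n).coeff k =
      (-1) ^ k * n.choose k * (poch (n + c + d - 1) k / poch c k) := by
  simp only [shiftedJacobi, finsetSum_coeff, coeff_C_mul_X_pow, sum_ite_eq, mem_range]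
  split_ifs with h
  · rfl
  · rw [Nat.choose_eq_zero_of_lt (by lia)]
    simp

theorem natDegree_shiftedJacobi_le (c d : ℝ) (n : ℕ) : (shiftedJacobi c d n).natDegree ≤ n :=
  natDegree_sum_le_of_forall_le _ _ fun k hk =>
    (natDegree_C_mul_X_pow_le _ k).trans (Nat.lt_succ_iff.mp (mem_range.mp hk))

theorem poch_div_poch_mul_beta {n j : ℕ} (hj : j ≤ n) (hc : 0 < c) (hd : 0 < d)
    (hz : 0 < n + c + d - 1) (k : ℕ) :
    poch (n + c + d - 1) k / poch c k * beta (c + (j + k : ℕ)) d =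
      Real.Gamma c * Real.Gamma d / Real.Gamma (n + c + d - 1) *
        (poch (c + k) j * poch (c + d + j + k) (n - j) / (n + c + d - 1 + k)) := by
  have beta_num : Real.Gamma (c + (j + k : ℕ)) = poch (c + k) j * (poch c k * Real.Gamma c) := by
    rw [← Gamma_add_natCast hc, ← Gamma_add_natCast (by positivity)]
    push_cast
    ring_nf
  have beta_den : poch (c + d + j + k) (n - j) * Real.Gamma (c + (j + k : ℕ) + d) =
      (n + c + d - 1 + k) * (poch (n + c + d - 1) k * Real.Gamma (n + c + d - 1)) := by
    rw [← Gamma_add_natCast hz, ← Real.Gamma_add_one (by positivity)]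
    have h := Gamma_add_natCast (a := c + d + j + k) (by positivity) (n - j)
    rw [Nat.cast_sub hj] at h
    push_cast
    convert h.symm using 2 <;> ring_nf
  have := Real.Gamma_pos_of_pos hz
  have := poch_pos hc k
  have : 0 < Real.Gamma (c + (j + k : ℕ) + d) := Real.Gamma_pos_of_pos (by positivity)
  rw [beta, beta_num]
  field_simp
  linear_combination -poch (c + k) j * beta_den

theorem sum_coeff_shiftedJacobi_mul_beta {n j : ℕ} (hj : j ≤ n) (hc : 0 < c) (hd : 0 < d)
    (hz : 0 < n + c + d - 1) :
    ∑ k ∈ range (n + 1), (shiftedJacobi c d n).coeff k * beta (c + (j + k : ℕ)) d =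
      if j = n then (-1) ^ n * n.factorial / poch c n * beta (c + n) (d + n) else 0 := by
  set z := n + c + d - 1 with hz_def
  let P : ℝ[X] := (ascPochhammer ℝ j).comp (X + C c) *
    (ascPochhammer ℝ (n - j)).comp (X + C (c + d + j))
  have natDegree_P : P.natDegree ≤ n := by
    refine natDegree_mul_le.trans ?_
    simp only [natDegree_comp, ascPochhammer_natDegree, natDegree_X_add_C]
    lia
  have eval_P (x : ℝ) : P.eval x = poch (c + x) j * poch (c + d + j + x) (n - j) := by
    simp only [P, eval_mul, eval_comp, eval_add, eval_X, eval_C, poch_eq_eval_ascPochhammer,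
      add_comm x]
  calc
    _ = Real.Gamma c * Real.Gamma d / Real.Gamma z *
        ∑ k ∈ range (n + 1), (-1) ^ k * n.choose k * (P.eval (k : ℝ) / (z + k)) := by
      rw [mul_sum]
      refine sum_congr rfl fun k _ => ?_
      rw [coeff_shiftedJacobi, mul_assoc, poch_div_poch_mul_beta hj hc hd hz, eval_P]
      ring
    _ = Real.Gamma c * Real.Gamma d / Real.Gamma z *
        (n.factorial * P.eval (-z) / poch z (n + 1)) := by
      rw [sum_neg_one_pow_mul_choose_mul_eval_div natDegree_P fun k _ => by positivity]
    _ = _ := ?_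
  rw [eval_P, show c + -z = 1 - d - n by rw [hz_def]; ring,
    show c + d + j + -z = j + 1 - n by rw [hz_def]; ring, poch_mul_poch_of_le hj]
  split_ifs
  · rw [beta, Gamma_add_natCast hc, Gamma_add_natCast hd,
      show c + n + (d + n) = z + (n + 1 : ℕ) by rw [hz_def]; push_cast; ring,
      Gamma_add_natCast hz]
    have := poch_pos hc n
    field_simp
  · simp

theorem integral_betaWeight_mul_shiftedJacobi_mul_pow {n j : ℕ} (hj : j ≤ n) (hc : 0 < c)
    (hd : 0 < d) :
    ∫ x in (0 : ℝ)..1, betaWeight c d x * ((shiftedJacobi c d n).eval x * x ^ j) =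
      if j = n then (-1) ^ n * n.factorial / poch c n * beta (c + n) (d + n) else 0 := by
  rcases n.eq_zero_or_pos with rfl | hn
  · obtain rfl : j = 0 := by lia
    simp [shiftedJacobi, poch, integral_betaWeight hc hd]
  · have hn' : (1 : ℝ) ≤ n := by exact_mod_cast hn
    have expand (x : ℝ) : (shiftedJacobi c d n).eval x * x ^ j =
        ∑ k ∈ range (n + 1), (shiftedJacobi c d n).coeff k * (X ^ (j + k) : ℝ[X]).eval x := by
      rw [eval_eq_sum_range' (Nat.lt_succ_of_le (natDegree_shiftedJacobi_le c d n)), sum_mul]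
      refine sum_congr rfl fun k _ => ?_
      rw [eval_pow, eval_X]
      ring
    simp only [expand]
    rw [integral_betaWeight_mul_sum hc hd]
    simp only [eval_pow, eval_X, integral_betaWeight_mul_pow hc hd]
    exact sum_coeff_shiftedJacobi_mul_beta hj hc hd (by linarith)

theorem integral_betaWeight_mul_shiftedJacobi_mul_eval {n : ℕ} {Q : ℝ[X]}
    (hQ : Q.natDegree ≤ n) (hc : 0 < c) (hd : 0 < d) :
    ∫ x in (0 : ℝ)..1, betaWeight c d x * ((shiftedJacobi c d n).eval x * Q.eval x) =
      Q.coeff n * ((-1) ^ n * n.factorial / poch c n * beta (c + n) (d + n)) := by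
  have expand (x : ℝ) : (shiftedJacobi c d n).eval x * Q.eval x =
      ∑ j ∈ range (n + 1), Q.coeff j * (shiftedJacobi c d n * X ^ j).eval x := by
    rw [eval_eq_sum_range' (Nat.lt_succ_of_le hQ), mul_sum]
    refine sum_congr rfl fun j _ => ?_
    rw [eval_mul, eval_pow, eval_X]
    ring
  simp only [expand]
  rw [integral_betaWeight_mul_sum hc hd]
  simp only [eval_mul, eval_pow, eval_X]
  rw [sum_eq_single_of_mem n (self_mem_range_succ n) fun j hj hjn => ?_,
    integral_betaWeight_mul_shiftedJacobi_mul_pow le_rfl hc hd, if_pos rfl]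
  rw [integral_betaWeight_mul_shiftedJacobi_mul_pow (Nat.lt_succ_iff.mp (mem_range.mp hj)) hc hd,
    if_neg hjn, mul_zero]

theorem integral_betaWeight_mul_shiftedJacobi_mul_shiftedJacobi (hc : 0 < c) (hd : 0 < d)
    (n m : ℕ) :
    ∫ x in (0 : ℝ)..1,
        betaWeight c d x * ((shiftedJacobi c d n).eval x * (shiftedJacobi c d m).eval x) =
      if n = m then
        n.factorial * poch (n + c + d - 1) n / poch c n ^ 2 * beta (c + n) (d + n)
      else 0 := by
  wlog hmn : m ≤ n generalizing n m
  · simp only [mul_comm ((shiftedJacobi c d n).eval _), this m n (by lia),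
      if_neg (show m ≠ n by lia), if_neg (show n ≠ m by lia)]
  rw [integral_betaWeight_mul_shiftedJacobi_mul_eval
    ((natDegree_shiftedJacobi_le c d m).trans hmn) hc hd, coeff_shiftedJacobi]
  split_ifs with hnm
  · subst hnm
    have sign : (-1 : ℝ) ^ n * (-1) ^ n = 1 := by rw [← mul_pow]; norm_num
    rw [Nat.choose_self, Nat.cast_one]
    linear_combination (poch (n + c + d - 1) n / poch c n ^ 2 * n.factorial *
      beta (c + n) (d + n)) * sign
  · rw [Nat.choose_eq_zero_of_lt (by lia)]
    simp

theorem poch_div_poch_sq_mul_beta (hc : 0 < c) {n : ℕ} (hz : 0 < n + c + c - 1) :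
    poch (n + c + c - 1) n / poch c n ^ 2 * beta (c + n) (c + n) =
      Real.Gamma c ^ 2 / ((2 * n + 2 * c - 1) * Real.Gamma (n + c + c - 1)) := by
  have beta_den : Real.Gamma (c + n + (c + n)) =
      (2 * n + 2 * c - 1) * (poch (n + c + c - 1) n * Real.Gamma (n + c + c - 1)) := by
    rw [← Gamma_add_natCast hz, show c + n + (c + n) = n + c + c - 1 + n + 1 by ring,
      Real.Gamma_add_one (by positivity)]
    ring
  have := poch_pos hc n
  have := poch_pos hz n
  rw [beta, beta_den, Gamma_add_natCast hc]
  field_simp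

end Jacobi

section Substitution

open MeasureTheory

theorem image_one_div_sq_add_one : (fun r : ℝ => 1 / (r ^ 2 + 1)) '' Set.Ioi 0 = Set.Ioo 0 1 := by
  ext x
  simp only [Set.mem_image, Set.mem_Ioi, Set.mem_Ioo]
  constructor
  · rintro ⟨r, hr, rfl⟩
    exact ⟨by positivity, (div_lt_one (by positivity)).mpr (by simpa using pow_pos hr 2)⟩
  · rintro ⟨hx_pos, hx_lt⟩
    have hr : 0 < 1 / x - 1 := sub_pos.mpr (one_lt_one_div hx_pos hx_lt)
    exact ⟨√(1 / x - 1), Real.sqrt_pos.mpr hr, by rw [Real.sq_sqrt hr.le]; simp⟩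

theorem hasDerivAt_one_div_sq_add_one (r : ℝ) :
    HasDerivAt (fun r : ℝ => 1 / (r ^ 2 + 1)) (-(2 * r / (r ^ 2 + 1) ^ 2)) r := by
  have denom : HasDerivAt (fun r : ℝ => r ^ 2 + 1) (2 * r) r := by
    simpa using (hasDerivAt_pow 2 r).add_const 1
  simpa only [one_div, neg_div] using denom.fun_inv (by positivity)

theorem integral_comp_one_div_sq_add_one (f : ℝ → ℝ) :
    ∫ r in Set.Ioi (0 : ℝ), 2 * r / (r ^ 2 + 1) ^ 2 * f (1 / (r ^ 2 + 1)) =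
      ∫ x in (0 : ℝ)..1, f x := by
  have antitone : AntitoneOn (fun r : ℝ => 1 / (r ^ 2 + 1)) (Set.Ioi 0) := by
    intro a ha b _ hab
    have : 0 < a := ha
    dsimp only
    gcongr
  rw [intervalIntegral.integral_of_le zero_le_one, integral_Ioc_eq_integral_Ioo,
    ← image_one_div_sq_add_one, integral_image_eq_integral_deriv_smul_of_antitoneOn
      measurableSet_Ioi (fun r _ => (hasDerivAt_one_div_sq_add_one r).hasDerivWithinAt) antitone]
  simp only [neg_neg, smul_eq_mul]

end Substitution

section Radial

variable {M : ℕ}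

/-- The factor of `eta M n l` that does not depend on the radius, which makes it a unit vector. -/
noncomputable def etaNorm (M n l : ℕ) : ℝ :=
  2 / Real.Gamma (l + M / 2) *
    √((n + l + ((M : ℝ) - 1) / 2) * Real.Gamma (n + 2 * l + M - 1) / n.factorial)

theorem eta_eq_etaNorm_mul (M n l : ℕ) (r : ℝ) :
    eta M n l r = etaNorm M n l * (r ^ l / (r ^ 2 + 1) ^ ((l : ℝ) + M / 2)) *
      (shiftedJacobi (l + M / 2) (l + M / 2) n).eval (1 / (r ^ 2 + 1)) := by
  rw [eval_shiftedJacobi, eta, etaNorm]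
  ring_nf

theorem betaWeight_one_div_sq_add_one (c : ℝ) {r : ℝ} (hr : 0 < r) :
    betaWeight c c (1 / (r ^ 2 + 1)) = (r / (r ^ 2 + 1)) ^ (2 * (c - 1)) := by
  have one_sub : 1 - 1 / (r ^ 2 + 1) = r ^ 2 / (r ^ 2 + 1) := by
    field_simp
    ring
  rw [betaWeight, one_sub, ← Real.mul_rpow (by positivity) (by positivity),
    Real.rpow_mul (by positivity), Real.rpow_two]
  congr 1
  field_simp

theorem pow_mul_sq_eq_mul_betaWeight (hM : 0 < M) (l : ℕ) {r : ℝ} (hr : 0 < r) :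
    r ^ (M - 1) * (r ^ l / (r ^ 2 + 1) ^ ((l : ℝ) + M / 2)) ^ 2 =
      2⁻¹ * (2 * r / (r ^ 2 + 1) ^ 2 *
        betaWeight (l + M / 2) (l + M / 2) (1 / (r ^ 2 + 1))) := by
  have hs : 0 < r ^ 2 + 1 := by positivity
  have r_pow : r ^ (M - 1) * (r ^ l) ^ 2 = r * r ^ (2 * ((l : ℝ) + M / 2 - 1)) := by
    rw [mul_comm r, ← Real.rpow_add_one hr.ne', ← pow_mul, ← pow_add, ← Real.rpow_natCast]
    push_cast [Nat.cast_sub (show 1 ≤ M from hM)]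
    ring_nf
  have s_pow : (r ^ 2 + 1) ^ (2 * ((l : ℝ) + M / 2 - 1)) * (r ^ 2 + 1) ^ 2 =
      ((r ^ 2 + 1) ^ ((l : ℝ) + M / 2)) ^ 2 := by
    rw [← Real.rpow_add_natCast hs.ne', ← Real.rpow_mul_natCast hs.le]
    push_cast
    ring_nf
  rw [betaWeight_one_div_sq_add_one _ hr, Real.div_rpow hr.le hs.le, div_pow, ← mul_div_assoc,
    r_pow, ← s_pow]
  field_simp

theorem integral_eta_mul_eta (hM : 0 < M) (l n₁ n₂ : ℕ) :
    ∫ r in Set.Ioi (0 : ℝ), r ^ (M - 1) * eta M n₁ l r * eta M n₂ l r =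
      2⁻¹ * etaNorm M n₁ l * etaNorm M n₂ l *
        ∫ x in (0 : ℝ)..1, betaWeight (l + M / 2) (l + M / 2) x *
          ((shiftedJacobi (l + M / 2) (l + M / 2) n₁).eval x *
            (shiftedJacobi (l + M / 2) (l + M / 2) n₂).eval x) := by
  rw [← integral_comp_one_div_sq_add_one, ← MeasureTheory.integral_const_mul]
  refine MeasureTheory.setIntegral_congr_fun measurableSet_Ioi fun r hr => ?_
  rw [eta_eq_etaNorm_mul, eta_eq_etaNorm_mul]
  linear_combination (etaNorm M n₁ l * etaNorm M n₂ l *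
    (shiftedJacobi (l + M / 2) (l + M / 2) n₁).eval (1 / (r ^ 2 + 1)) *
    (shiftedJacobi (l + M / 2) (l + M / 2) n₂).eval (1 / (r ^ 2 + 1))) *
      pow_mul_sq_eq_mul_betaWeight hM l hr

theorem etaNorm_sq {n l : ℕ} {c : ℝ} (hc : c = l + M / 2) (hz : 0 < n + c + c - 1) :
    etaNorm M n l ^ 2 =
      2 * (2 * n + 2 * c - 1) * Real.Gamma (n + c + c - 1) / (n.factorial * Real.Gamma c ^ 2) := by
  have hy : 0 < 2 * n + 2 * c - 1 := by linarith [n.cast_nonneg (α := ℝ)]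
  have radicand : (n + l + ((M : ℝ) - 1) / 2) * Real.Gamma (n + 2 * l + M - 1) / n.factorial =
      (2 * n + 2 * c - 1) / 2 * Real.Gamma (n + c + c - 1) / n.factorial := by
    rw [hc]
    ring_nf
  rw [etaNorm, radicand, ← hc, mul_pow, Real.sq_sqrt (by positivity)]
  ring

theorem etaNorm_sq_mul_integral_shiftedJacobi_sq {n l : ℕ} {c : ℝ} (hc : c = l + M / 2)
    (hc_pos : 0 < c) (hz : 0 < n + c + c - 1) :
    etaNorm M n l ^ 2 *
      ∫ x in (0 : ℝ)..1, betaWeight c c x *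
        ((shiftedJacobi c c n).eval x * (shiftedJacobi c c n).eval x) = 2 := by
  have hy : 2 * (n + c) - 1 ≠ 0 := ne_of_gt (by linarith [n.cast_nonneg (α := ℝ)])
  have := Real.Gamma_pos_of_pos hz
  have := Real.Gamma_pos_of_pos hc_pos
  rw [integral_betaWeight_mul_shiftedJacobi_mul_shiftedJacobi hc_pos hc_pos, if_pos rfl,
    mul_div_assoc, mul_assoc _ (_ / _), poch_div_poch_sq_mul_beta hc_pos hz, etaNorm_sq hc hz]
  field_simp

end Radial

theorem stmt8_general {M : ℕ} (hM : 0 < M) (l n₁ n₂ : ℕ) (h : 1 < min n₁ n₂ + 2 * l + M) :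
    ∫ r in Set.Ioi (0 : ℝ), r ^ (M - 1) * eta M n₁ l r * eta M n₂ l r =
      if n₁ = n₂ then 1 else 0 := by
  have hc : (0 : ℝ) < l + M / 2 := by positivity
  rw [integral_eta_mul_eta hM]
  split_ifs with hn
  · subst hn
    rw [min_self] at h
    have hz : (1 : ℝ) < n₁ + 2 * l + M := by exact_mod_cast h
    rw [mul_assoc 2⁻¹, ← sq, mul_assoc,
      etaNorm_sq_mul_integral_shiftedJacobi_sq rfl hc (by linarith), inv_mul_cancel₀ two_ne_zero]
  · rw [integral_betaWeight_mul_shiftedJacobi_mul_shiftedJacobi hc hc, if_neg hn, mul_zero]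

theorem stmt8 (M : ℕ) (hM : 2 ≤ M) (l n₁ n₂ : ℕ) (ν : ℝ)
    (hν₁ : ν < M + 2 * ((l : ℝ) + n₁)) (hν₂ : ν < M + 2 * ((l : ℝ) + n₂)) :
    ∫ r in Set.Ioi (0 : ℝ), r ^ (M - 1) * eta M n₁ l r * eta M n₂ l r =
      if n₁ = n₂ then 1 else 0 :=
  stmt8_general (by lia) l n₁ n₂ (by lia)
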